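/- Let k = k(n) → ∞ with k = o(n), let (w_i)_{i∈[n]} satisfy Assumption 1 and the community weights satisfy Assumption 2, with parameters τ ∈ (2,3), C, w_0 > 0, γ ∈ (1,∞), d ≥ 1. Under the alternative model H₁, the expected weighted triangle statistic satisfies E₁[W] = Ω(k) as n → ∞; in particular E₁[W] ≥ (w_0²/(μ k))² · Σ_{{a,b,c} ⊂ V_C} 1/(w_a w_b w_c) · (1/(1+C₁))³ = Θ(k). -/

import Mathlib

open MeasureTheory ProbabilityTheory Filter Finset Asymptotics
open scoped Topology ENNReal NNReal Classical

noncomputable section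

/-- The torus distance on `[0,1]^d`:
`‖x - y‖ = sup_i min (|x i - y i|) (1 - |x i - y i|)`. -/
def torusDist (d : ℕ) (x y : Fin d → ℝ) : ℝ :=
  ⨆ i : Fin d, min |x i - y i| (1 - |x i - y i|)

/-- The uniform probability measure on `[0,1]`. -/
def unifI : Measure ℝ := volume.restrict (Set.Icc 0 1)

/-- The uniform probability measure on the cube `[0,1]^d`. -/
def unifCube (d : ℕ) : Measure (Fin d → ℝ) := volume.restrict (Set.Icc 0 1)

/-- Assumption 1: the empirical weight distribution has a power-law tail,
`1 - F_n(x) = C x^(1-τ) (1 + o(1))` uniformly for `w0 ≤ x ≤ n^(1/(τ-1)) / log n`. -/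
def Assumption1 (τ C w0 : ℝ) (w : (n : ℕ) → Fin n → ℝ) : Prop :=
  ∀ ε > (0:ℝ), ∃ N : ℕ, ∀ n ≥ N, ∀ x : ℝ, w0 ≤ x →
    x ≤ (n : ℝ) ^ ((1:ℝ) / (τ - 1)) / Real.log n →
    |((univ.filter fun i : Fin n => x < w n i).card : ℝ) / n - C * x ^ (1 - τ)|
      ≤ ε * (C * x ^ (1 - τ))

/-- Assumption 2: the empirical distribution of the community weights has a power-law tail,
`1 - F_k(x) = C x^(1-τ) (1 + o(1))` for `w0 ≤ x = O(k^(1/(τ-1)) / log k)`.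
The community consists of the vertices `i` with `i.val < k n`. -/
def Assumption2 (τ C w0 : ℝ) (k : ℕ → ℕ) (w : (n : ℕ) → Fin n → ℝ) : Prop :=
  ∀ A > (0:ℝ), ∀ ε > (0:ℝ), ∃ N : ℕ, ∀ n ≥ N, ∀ x : ℝ, w0 ≤ x →
    x ≤ A * (k n : ℝ) ^ ((1:ℝ) / (τ - 1)) / Real.log (k n) →
    |((univ.filter fun i : Fin n => i.val < k n ∧ x < w n i).card : ℝ) / (k n)
      - C * x ^ (1 - τ)| ≤ ε * (C * x ^ (1 - τ))

/-- `μ = E[X] = C (τ-1)/(τ-2) w₀^(2-τ)`, the mean of the Pareto distribution. -/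
def muPar (τ C w0 : ℝ) : ℝ := C * (τ - 1) / (τ - 2) * w0 ^ (2 - τ)

/-- IRG connection probability `p_{ij} = min (w_i w_j / (μ n)) 1`. -/
def pIRG (n : ℕ) (μ : ℝ) (w : Fin n → ℝ) (i j : Fin n) : ℝ :=
  min (w i * w j / (μ * n)) 1

/-- The correction constant `C₁ = (1 + (γ-1)⁻¹) 2^d`. -/
def C1 (d : ℕ) (γ : ℝ) : ℝ := (1 + (γ - 1)⁻¹) * 2 ^ d

/-- The geometric (GIRG) connection probability
`min (w_i w_j / (μ k ‖x-y‖^d)) 1 ^ γ` (without the correction factor). -/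
def pGIRG (k d : ℕ) (γ μ wi wj : ℝ) (x y : Fin d → ℝ) : ℝ :=
  (min (wi * wj / (μ * k * torusDist d x y ^ d)) 1) ^ γ

/-- The connection probability under the alternative model `H₁`: type-B vertices are the
vertices `i` with `i.val < k`; two type-B vertices use the geometric rule, any other pair
uses the IRG rule; both carry the correction factor `(1 + C₁)⁻¹`. -/
def pH1 (n k d : ℕ) (γ μ : ℝ) (w : Fin n → ℝ) (pos : Fin n → Fin d → ℝ) (i j : Fin n) : ℝ :=
  if i.val < k ∧ j.val < k then
    (1 + C1 d γ)⁻¹ * pGIRG k d γ μ (w i) (w j) (pos i) (pos j)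
  else (1 + C1 d γ)⁻¹ * pIRG n μ w i j

/-- Sample space of the alternative model: a uniform position on the torus for every vertex
(only those of the community members are used) and an independent uniform `[0,1]` variable
for every pair of vertices, generating the conditionally independent edge indicators. -/
abbrev H1Space (n d : ℕ) := (Fin n → Fin d → ℝ) × (Fin n → Fin n → ℝ)

/-- The law `P₁` of the alternative model (positions and edge-generating uniforms). -/
def H1Measure (n d : ℕ) : Measure (H1Space n d) :=
  (Measure.pi fun _ : Fin n => unifCube d).prod
    (Measure.pi fun _ : Fin n => Measure.pi fun _ : Fin n => unifI)

/-- Under `H₁`, the edge `{i,j}` is present iff the uniform variable attached to the pair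
`{i,j}` is at most `p_{ij}` (which depends on the positions); no self-loops. -/
def edgeH1 (n k d : ℕ) (γ μ : ℝ) (w : Fin n → ℝ) (ω : H1Space n d) (i j : Fin n) : Prop :=
  i ≠ j ∧ ω.2 (min i j) (max i j) ≤ pH1 n k d γ μ w ω.1 i j

def triH1 (n k d : ℕ) (γ μ : ℝ) (w : Fin n → ℝ) (ω : H1Space n d) (a b c : Fin n) : Prop :=
  edgeH1 n k d γ μ w ω a b ∧ edgeH1 n k d γ μ w ω b c ∧ edgeH1 n k d γ μ w ω c a

/-- The weighted triangle statistic under `H₁`. -/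
def WH1 (n k d : ℕ) (γ μ : ℝ) (w : Fin n → ℝ) (ω : H1Space n d) : ℝ :=
  ∑ a : Fin n, ∑ b : Fin n, ∑ c : Fin n,
    if triH1 n k d γ μ w ω a b c then (w a * w b * w c)⁻¹ else 0

/-- The local weighted triangle statistic
`W(a) = (n / w_a²) Σ_{b,c} (w_b w_c)⁻¹ 1{a,b,c triangle}`. -/
def WlocH1 (n k d : ℕ) (γ μ : ℝ) (w : Fin n → ℝ) (a : Fin n) (ω : H1Space n d) : ℝ :=
  ((n : ℝ) / w a ^ 2) * ∑ b : Fin n, ∑ c : Fin n,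
    if triH1 n k d γ μ w ω a b c then (w b * w c)⁻¹ else 0

instance : IsProbabilityMeasure unifI := ⟨by simp [unifI]⟩

instance (d : ℕ) : IsProbabilityMeasure (unifCube d) :=
  ⟨by simp [unifCube, Real.volume_Icc_pi]⟩

instance (n d : ℕ) : IsProbabilityMeasure (H1Measure n d) := by
  unfold H1Measure; infer_instance

lemma C1_pos (d : ℕ) {γ : ℝ} (hγ : 1 < γ) : 0 < C1 d γ := by
  have : 0 < γ - 1 := by linarith
  unfold C1; positivity

lemma measurable_torusDist (d : ℕ) {α : Type*} [MeasurableSpace α] {f g : α → Fin d → ℝ}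
    (hf : Measurable f) (hg : Measurable g) : Measurable fun a => torusDist d (f a) (g a) := by
  have hf' := fun i => (measurable_pi_apply i).comp hf
  have hg' := fun i => (measurable_pi_apply i).comp hg
  have h : ∀ i, Measurable fun a => |f a i - g a i| := fun i =>
    continuous_abs.measurable.comp ((hf' i).sub (hg' i))
  unfold torusDist
  exact Measurable.iSup fun i => (h i).min (measurable_const.sub (h i))

lemma measurable_pH1 (n k d : ℕ) (γ μ : ℝ) (w : Fin n → ℝ) (i j : Fin n) :
    Measurable fun pos : Fin n → Fin d → ℝ => pH1 n k d γ μ w pos i j := by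
  unfold pH1 pGIRG
  split_ifs
  · have h := measurable_torusDist d (measurable_pi_apply (X := fun _ : Fin n => Fin d → ℝ) i)
      (measurable_pi_apply j)
    exact (((measurable_const.div ((h.pow_const d).const_mul _)).min measurable_const).pow_const
      _).const_mul _
  · exact measurable_const

lemma measurableSet_edgeH1 (n k d : ℕ) (γ μ : ℝ) (w : Fin n → ℝ) (i j : Fin n) :
    MeasurableSet {ω | edgeH1 n k d γ μ w ω i j} := by
  have h : MeasurableSet {ω : H1Space n d |
      ω.2 (min i j) (max i j) ≤ pH1 n k d γ μ w ω.1 i j} := by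
    refine measurableSet_le ?_ ?_
    · exact (measurable_pi_apply _).comp ((measurable_pi_apply _).comp measurable_snd)
    · exact (measurable_pH1 n k d γ μ w i j).comp measurable_fst
  exact (MeasurableSet.const (i ≠ j)).inter h

lemma measurableSet_triH1 (n k d : ℕ) (γ μ : ℝ) (w : Fin n → ℝ) (a b c : Fin n) :
    MeasurableSet {ω | triH1 n k d γ μ w ω a b c} :=
  (measurableSet_edgeH1 n k d γ μ w a b).inter
    ((measurableSet_edgeH1 n k d γ μ w b c).inter (measurableSet_edgeH1 n k d γ μ w c a))

lemma integral_WH1 (n k d : ℕ) (γ μ : ℝ) (w : Fin n → ℝ) :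
    ∫ ω, WH1 n k d γ μ w ω ∂(H1Measure n d) =
      ∑ a : Fin n, ∑ b : Fin n, ∑ c : Fin n,
        (H1Measure n d).real {ω | triH1 n k d γ μ w ω a b c} * (w a * w b * w c)⁻¹ := by
  have key : ∀ a b c, (fun ω => if triH1 n k d γ μ w ω a b c then (w a * w b * w c)⁻¹ else 0) =
      Set.indicator {ω | triH1 n k d γ μ w ω a b c} (fun _ => (w a * w b * w c)⁻¹) := by
    intro a b c; ext ω; simp [Set.indicator]
  have hint : ∀ a b c, Integrable
      (fun ω => if triH1 n k d γ μ w ω a b c then (w a * w b * w c)⁻¹ else 0)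
      (H1Measure n d) := by
    intro a b c
    rw [key]
    exact (integrable_const _).indicator (measurableSet_triH1 ..)
  unfold WH1
  rw [integral_finsetSum _ fun a _ => integrable_finsetSum _ fun b _ =>
    integrable_finsetSum _ fun c _ => hint a b c]
  refine Finset.sum_congr rfl fun a _ => ?_
  rw [integral_finsetSum _ fun b _ => integrable_finsetSum _ fun c _ => hint a b c]
  refine Finset.sum_congr rfl fun b _ => ?_
  rw [integral_finsetSum _ fun c _ => hint a b c]
  refine Finset.sum_congr rfl fun c _ => ?_
  rw [key, integral_indicator_const _ (measurableSet_triH1 ..), smul_eq_mul]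

/-- The half-open grid cell `∏ i, [g i / L, (g i + 1) / L)`. -/
def gridCell (d L : ℕ) (g : Fin d → ℕ) : Set (Fin d → ℝ) :=
  Set.pi Set.univ fun i => Set.Ico ((g i : ℝ) / L) ((g i + 1 : ℝ) / L)

lemma measurableSet_gridCell (d L : ℕ) (g : Fin d → ℕ) : MeasurableSet (gridCell d L g) :=
  MeasurableSet.univ_pi fun _ => measurableSet_Ico

lemma unifCube_gridCell {d L : ℕ} {g : Fin d → ℕ} (hg : ∀ i, g i < L) :
    unifCube d (gridCell d L g) = ENNReal.ofReal ((((L : ℝ) ^ d)⁻¹)) := by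
  have hsub : gridCell d L g ⊆ Set.Icc 0 1 := by
    intro x hx
    refine ⟨fun i => ?_, fun i => ?_⟩
    · have := (hx i trivial).1
      exact le_trans (by positivity) this
    · have h2 := (hx i trivial).2
      have hL : (0 : ℝ) < L := by exact_mod_cast (Nat.zero_le _).trans_lt (hg i)
      have h3 : (g i + 1 : ℝ) ≤ L := by exact_mod_cast hg i
      exact h2.le.trans ((div_le_one hL).2 h3)
  rw [unifCube, Measure.restrict_apply (measurableSet_gridCell ..), Set.inter_eq_left.2 hsub,
    gridCell, volume_pi_pi]
  have : ∀ i, volume (Set.Ico ((g i : ℝ) / L) ((g i + 1 : ℝ) / L)) =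
      ENNReal.ofReal ((L : ℝ)⁻¹) := by
    intro i
    rw [Real.volume_Ico]
    congr 1
    ring
  simp only [this, Finset.prod_const, Finset.card_univ, Fintype.card_fin]
  rw [← ENNReal.ofReal_pow (by positivity), inv_pow]

lemma pow_card_le_prod_ite {ι : Type*} [Fintype ι] (P : Finset ι) {r : ℕ} (hP : P.card ≤ r)
    {q : ℝ≥0∞} (hq : q ≤ 1) : q ^ r ≤ ∏ i, if i ∈ P then q else 1 := by
  rw [Finset.prod_ite_mem, Finset.univ_inter, Finset.prod_const]
  exact pow_le_pow_right_of_le_one' hq hP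

lemma le_measure_uniforms {n : ℕ} (P : Finset (Fin n × Fin n)) {r : ℕ} (hP : P.card ≤ r)
    {q : ℝ} (hq : q ≤ 1) :
    ENNReal.ofReal q ^ r ≤ (Measure.pi fun _ : Fin n => Measure.pi fun _ : Fin n => unifI)
      {u | ∀ p ∈ P, u p.1 p.2 ≤ q} := by
  have hset : {u : Fin n → Fin n → ℝ | ∀ p ∈ P, u p.1 p.2 ≤ q} =
      Set.pi Set.univ fun i => Set.pi Set.univ fun j =>
        if (i, j) ∈ P then Set.Iic q else Set.univ := by
    ext u
    simp only [Set.mem_ofPred_eq, Set.mem_pi, Set.mem_univ, true_imp_iff, Prod.forall]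
    refine forall_congr' fun i => forall_congr' fun j => ?_
    split_ifs with h <;> simp [h]
  have hI : unifI (Set.Iic q) = ENNReal.ofReal q := by
    have : Set.Iic q ∩ Set.Icc 0 1 = Set.Icc 0 q := by
      ext x
      simp only [Set.mem_inter_iff, Set.mem_Iic, Set.mem_Icc]
      constructor
      · rintro ⟨h1, h2, -⟩; exact ⟨h2, h1⟩
      · rintro ⟨h1, h2⟩; exact ⟨h2, h1, h2.trans hq⟩
    rw [unifI, Measure.restrict_apply measurableSet_Iic, this, Real.volume_Icc, sub_zero]
  have hite : ∀ i j, unifI (if (i, j) ∈ P then Set.Iic q else Set.univ) =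
      if (i, j) ∈ P then ENNReal.ofReal q else 1 := by
    intro i j
    split_ifs
    · exact hI
    · exact measure_univ
  rw [hset, Measure.pi_pi]
  simp only [Measure.pi_pi, hite]
  rw [← Fintype.prod_prod_type' (f := fun i j => if (i, j) ∈ P then ENNReal.ofReal q else 1)]
  convert pow_card_le_prod_ite P hP (ENNReal.ofReal_le_one.2 hq)

/-- Positions for which `a`, `b`, `c` lie in three distinct diagonal subcells of the grid cell
`f` of side `1 / m`. -/
def clusterSet (n d m : ℕ) (a b c : Fin n) (f : Fin d → Fin m) : Set (Fin n → Fin d → ℝ) :=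
  Set.pi Set.univ fun v =>
    if v = a then gridCell d (3 * m) fun i => 3 * (f i : ℕ)
    else if v = b then gridCell d (3 * m) fun i => 3 * (f i : ℕ) + 1
    else if v = c then gridCell d (3 * m) fun i => 3 * (f i : ℕ) + 2
    else Set.univ

lemma measurableSet_clusterSet (n d m : ℕ) (a b c : Fin n) (f : Fin d → Fin m) :
    MeasurableSet (clusterSet n d m a b c f) := by
  refine MeasurableSet.univ_pi fun v => ?_
  split_ifs
  exacts [measurableSet_gridCell .., measurableSet_gridCell .., measurableSet_gridCell .., .univ]

lemma le_measure_clusterSet {n d m : ℕ} (hm : 0 < m) (a b c : Fin n) (f : Fin d → Fin m) :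
    ENNReal.ofReal (((3 * m : ℝ) ^ d)⁻¹) ^ 3 ≤
      (Measure.pi fun _ : Fin n => unifCube d) (clusterSet n d m a b c f) := by
  rw [clusterSet, Measure.pi_pi]
  have h1 : (1 : ℝ) ≤ 3 * m := by
    have : (1 : ℝ) ≤ m := by exact_mod_cast hm
    linarith
  refine (pow_card_le_prod_ite {a, b, c} Finset.card_le_three
    (ENNReal.ofReal_le_one.2 (inv_le_one_of_one_le₀ (one_le_pow₀ h1)))).trans (le_of_eq ?_)
  have h3 : ((3 * m : ℕ) : ℝ) = 3 * m := by push_cast; ring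
  refine Finset.prod_congr rfl fun v _ => ?_
  have hf : ∀ i, (f i : ℕ) < m := fun i => (f i).2
  by_cases ha : v = a
  · rw [if_pos (by simp [ha]), if_pos ha, unifCube_gridCell fun i => by have := hf i; lia, h3]
  by_cases hb : v = b
  · rw [if_pos (by simp [hb]), if_neg ha, if_pos hb,
      unifCube_gridCell fun i => by have := hf i; lia, h3]
  by_cases hc : v = c
  · rw [if_pos (by simp [hc]), if_neg ha, if_neg hb, if_pos hc,
      unifCube_gridCell fun i => by have := hf i; lia, h3]
  · rw [if_neg (by simp [ha, hb, hc]), if_neg ha, if_neg hb, if_neg hc, measure_univ]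

lemma disjoint_clusterSet {n d m : ℕ} (hm : 0 < m) (a b c : Fin n) :
    Pairwise (Function.onFun Disjoint (clusterSet n d m a b c)) := by
  intro f g hfg
  rw [Function.onFun, Set.disjoint_left]
  intro x hx hy
  apply hfg
  have h1 := hx a trivial
  have h2 := hy a trivial
  simp only [if_true] at h1 h2
  have hL : (0 : ℝ) < (3 * m : ℕ) := by exact_mod_cast (by lia : 0 < 3 * m)
  ext i
  have p1 := h1 i trivial
  have p2 := h2 i trivial
  have q1 := (div_lt_div_iff_of_pos_right hL).1 (p1.1.trans_lt p2.2)
  have q2 := (div_lt_div_iff_of_pos_right hL).1 (p2.1.trans_lt p1.2)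
  norm_cast at q1 q2
  lia

lemma torusDist_le_of_mem_gridCell {d m : ℕ} (hd : 1 ≤ d) {f : Fin d → Fin m} {s t : ℕ}
    (hst : s ≠ t) (hs : s < 3) (ht : t < 3) {x y : Fin d → ℝ}
    (hx : x ∈ gridCell d (3 * m) fun i => 3 * (f i : ℕ) + s)
    (hy : y ∈ gridCell d (3 * m) fun i => 3 * (f i : ℕ) + t) :
    0 < torusDist d x y ∧ torusDist d x y ≤ (m : ℝ)⁻¹ := by
  have i0 : Fin d := ⟨0, hd⟩
  have hmn : 0 < m := (Nat.zero_le _).trans_lt (f i0).2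
  have hm : (0 : ℝ) < m := by exact_mod_cast hmn
  have hcoord : ∀ i, |x i - y i| < (m : ℝ)⁻¹ ∧ x i ≠ y i := by
    intro i
    obtain ⟨x1, x2⟩ := hx i trivial
    obtain ⟨y1, y2⟩ := hy i trivial
    have hL : (0 : ℝ) < 3 * m := by positivity
    push_cast at x1 x2 y1 y2
    rw [div_le_iff₀ hL] at x1 y1
    rw [lt_div_iff₀ hL] at x2 y2
    have hs' : (s : ℝ) ≤ 2 := by exact_mod_cast Nat.lt_succ_iff.1 hs
    have ht' : (t : ℝ) ≤ 2 := by exact_mod_cast Nat.lt_succ_iff.1 ht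
    have hs0 : (0 : ℝ) ≤ s := by positivity
    have ht0 : (0 : ℝ) ≤ t := by positivity
    constructor
    · rw [abs_lt, ← one_div]
      have e : ∀ z : ℝ, z * m < 1 → z < 1 / m := fun z hz => (lt_div_iff₀ hm).2 hz
      constructor
      · have := e (y i - x i) (by linarith)
        linarith
      · exact e _ (by linarith)
    · intro h
      rw [h] at x1 x2
      have a1 : (s : ℝ) < t + 1 := by linarith
      have a2 : (t : ℝ) < s + 1 := by linarith
      norm_cast at a1 a2
      lia
  have hm1 : (m : ℝ)⁻¹ ≤ 1 := inv_le_one_of_one_le₀ (by exact_mod_cast hmn)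
  have hbdd : BddAbove (Set.range fun i => min |x i - y i| (1 - |x i - y i|)) :=
    (Set.finite_range _).bddAbove
  constructor
  · refine lt_of_lt_of_le ?_ (le_ciSup hbdd i0)
    have h := hcoord i0
    exact lt_min (abs_pos.2 (sub_ne_zero.2 h.2)) (by linarith [h.1])
  · have : Nonempty (Fin d) := ⟨i0⟩
    exact ciSup_le fun i => (min_le_left _ _).trans (hcoord i).1.le

lemma pH1_eq_of_torusDist_le {n k d m : ℕ} {γ μ w0 : ℝ} (hw0 : 0 < w0) (hμ : 0 < μ)
    (hm : 0 < m) (hmk : μ * k ≤ w0 ^ 2 * (m : ℝ) ^ d) {w : Fin n → ℝ} (hw : ∀ i, w0 ≤ w i)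
    {pos : Fin n → Fin d → ℝ} {i j : Fin n} (hi : i.val < k) (hj : j.val < k)
    (h0 : 0 < torusDist d (pos i) (pos j)) (h1 : torusDist d (pos i) (pos j) ≤ (m : ℝ)⁻¹) :
    pH1 n k d γ μ w pos i j = (1 + C1 d γ)⁻¹ := by
  have hk : (0 : ℝ) < k := by exact_mod_cast (Nat.zero_le _).trans_lt hi
  have hm' : (0 : ℝ) < m := by exact_mod_cast hm
  have hle : 1 ≤ w i * w j / (μ * k * torusDist d (pos i) (pos j) ^ d) := by
    rw [one_le_div (by positivity)]
    calc μ * k * torusDist d (pos i) (pos j) ^ d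
        ≤ (w0 ^ 2 * (m : ℝ) ^ d) * ((m : ℝ)⁻¹) ^ d := by gcongr
      _ = w0 * w0 := by rw [mul_assoc, ← mul_pow, mul_inv_cancel₀ hm'.ne', one_pow]; ring
      _ ≤ w i * w j := mul_le_mul (hw i) (hw j) hw0.le (hw0.le.trans (hw i))
  rw [pH1, if_pos ⟨hi, hj⟩, pGIRG, min_eq_right hle, Real.one_rpow, mul_one]

lemma le_measure_triH1 {n k d m : ℕ} {γ μ w0 : ℝ} (hd : 1 ≤ d) (hγ : 1 < γ) (hw0 : 0 < w0)
    (hμ : 0 < μ) (hm : 0 < m) (hmk : μ * k ≤ w0 ^ 2 * (m : ℝ) ^ d) {w : Fin n → ℝ}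
    (hw : ∀ i, w0 ≤ w i) {a b c : Fin n} (ha : a.val < k) (hb : b.val < k) (hc : c.val < k)
    (hab : a ≠ b) (hbc : b ≠ c) (hca : c ≠ a) :
    (m : ℝ) ^ d * (((3 * m : ℝ) ^ d)⁻¹) ^ 3 * ((1 + C1 d γ)⁻¹) ^ 3 ≤
      (H1Measure n d).real {ω | triH1 n k d γ μ w ω a b c} := by
  have hC := C1_pos d hγ
  set q : ℝ := (1 + C1 d γ)⁻¹ with hqdef
  have hq0 : 0 ≤ q := by positivity
  have hq1 : q ≤ 1 := inv_le_one_of_one_le₀ (by linarith)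
  let P : Finset (Fin n × Fin n) := {(min a b, max a b), (min b c, max b c), (min c a, max c a)}
  let B : Set (Fin n → Fin n → ℝ) := {u | ∀ p ∈ P, u p.1 p.2 ≤ q}
  let A : Set (Fin n → Fin d → ℝ) := ⋃ f, clusterSet n d m a b c f
  have hsub : A ×ˢ B ⊆ {ω | triH1 n k d γ μ w ω a b c} := by
    rintro ⟨x, u⟩ ⟨hx, hu⟩
    obtain ⟨f, hf⟩ := Set.mem_iUnion.1 hx
    have xa := hf a trivial
    have xb := hf b trivial
    have xc := hf c trivial
    simp only [if_true, if_neg hab.symm] at xa xb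
    simp only [if_true, if_neg hca, if_neg hbc.symm] at xc
    have edge : ∀ {i j : Fin n} {s t : ℕ}, i ≠ j → i.val < k → j.val < k → s ≠ t → s < 3 →
        t < 3 → (x i ∈ gridCell d (3 * m) fun l => 3 * (f l : ℕ) + s) →
        (x j ∈ gridCell d (3 * m) fun l => 3 * (f l : ℕ) + t) → (min i j, max i j) ∈ P →
        edgeH1 n k d γ μ w (x, u) i j := by
      intro i j s t hij hi hj hst hs ht hxi hxj hP
      obtain ⟨h0, h1⟩ := torusDist_le_of_mem_gridCell hd hst hs ht hxi hxj
      refine ⟨hij, ?_⟩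
      rw [pH1_eq_of_torusDist_le hw0 hμ hm hmk hw hi hj h0 h1]
      exact hu _ hP
    exact ⟨edge (s := 0) (t := 1) hab ha hb (by lia) (by lia) (by lia) xa xb (by simp [P]),
      edge (s := 1) (t := 2) hbc hb hc (by lia) (by lia) (by lia) xb xc (by simp [P]),
      edge (s := 2) (t := 0) hca hc ha (by lia) (by lia) (by lia) xc xa (by simp [P])⟩
  have hA : (m : ℝ≥0∞) ^ d * ENNReal.ofReal (((3 * m : ℝ) ^ d)⁻¹) ^ 3 ≤
      (Measure.pi fun _ : Fin n => unifCube d) A := by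
    rw [measure_iUnion (disjoint_clusterSet hm a b c) (measurableSet_clusterSet n d m a b c),
      tsum_fintype]
    refine le_trans (le_of_eq ?_)
      (Finset.sum_le_sum fun f _ => le_measure_clusterSet hm a b c f)
    simp
  have hB : ENNReal.ofReal q ^ 3 ≤
      (Measure.pi fun _ : Fin n => Measure.pi fun _ : Fin n => unifI) B :=
    le_measure_uniforms P Finset.card_le_three hq1
  have hAB := (mul_le_mul' hA hB).trans
    ((Measure.prod_prod A B).symm.le.trans (measure_mono (μ := H1Measure n d) hsub))
  have := ENNReal.toReal_mono (measure_ne_top _ _) hAB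
  rw [Measure.real]
  refine le_trans (le_of_eq ?_) this
  simp only [ENNReal.toReal_mul, ENNReal.toReal_pow, ENNReal.toReal_natCast]
  rw [ENNReal.toReal_ofReal hq0, ENNReal.toReal_ofReal (by positivity)]

lemma le_sum_triples {ι : Type*} [Fintype ι] (S : Finset ι) {g : ι → ι → ι → ℝ} {p : ℝ}
    (hp : 0 ≤ p) (hg : ∀ a b c, 0 ≤ g a b c)
    (hgp : ∀ a ∈ S, ∀ b ∈ S, ∀ c ∈ S, a ≠ b → b ≠ c → c ≠ a → p ≤ g a b c)
    (hS : 2 ≤ S.card) :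
    ((S.card : ℝ) - 2) ^ 3 * p ≤ ∑ a, ∑ b, ∑ c, g a b c := by
  have hs : (0 : ℝ) ≤ (S.card : ℝ) - 2 := by
    have : (2 : ℝ) ≤ S.card := by exact_mod_cast hS
    linarith
  have step : ∀ (T : Finset ι) (h : ι → ℝ) (r : ℝ), (S.card : ℝ) - 2 ≤ T.card → 0 ≤ r →
      (∀ i, 0 ≤ h i) → (∀ i ∈ T, r ≤ h i) → ((S.card : ℝ) - 2) * r ≤ ∑ i, h i := by
    intro T h r hT hr h0 hr'
    calc ((S.card : ℝ) - 2) * r ≤ T.card * r := by gcongr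
      _ = T.card • r := by simp
      _ ≤ ∑ i ∈ T, h i := Finset.card_nsmul_le_sum T h r hr'
      _ ≤ ∑ i, h i := Finset.sum_le_sum_of_subset_of_nonneg (Finset.subset_univ _)
          fun i _ _ => h0 i
  have card1 : ∀ (T : Finset ι) a, (T.card : ℝ) - 1 ≤ (T.erase a).card := by
    intro T a
    have : T.card - 1 ≤ (T.erase a).card := Finset.pred_card_le_card_erase
    have h2 : T.card ≤ (T.erase a).card + 1 := by lia
    have h3 : (T.card : ℝ) ≤ (T.erase a).card + 1 := by exact_mod_cast h2
    linarith
  have h := step S (fun a => ∑ b, ∑ c, g a b c)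
    (((S.card : ℝ) - 2) * (((S.card : ℝ) - 2) * p)) (by linarith) (by positivity)
    (fun a => Finset.sum_nonneg fun b _ => Finset.sum_nonneg fun c _ => hg a b c)
    (fun a ha => step (S.erase a) (fun b => ∑ c, g a b c) _ (by linarith [card1 S a])
      (by positivity) (fun b => Finset.sum_nonneg fun c _ => hg a b c)
      (fun b hb => step ((S.erase a).erase b) (fun c => g a b c) _
        (by linarith [card1 S a, card1 (S.erase a) b]) hp (fun c => hg a b c)
        (fun c hc => by
          simp only [Finset.mem_erase] at hb hc
          exact hgp a ha b hb.2 c hc.2.2 hb.1.symm hc.1.symm hc.2.1)))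
  refine le_trans (le_of_eq ?_) h
  ring

/-- At least half of the community vertices have weight below a constant. -/
lemma exists_half_le_card {τ C w0 : ℝ} (hτ : 2 < τ) {k : ℕ → ℕ}
    (hkn : ∀ n, k n ≤ n) (hkinf : Tendsto (fun n => k n) atTop atTop)
    {w : (n : ℕ) → Fin n → ℝ} (hA2 : Assumption2 τ C w0 k w) :
    ∃ M > (0 : ℝ), ∀ᶠ n in atTop,
      (k n : ℝ) / 2 ≤ (univ.filter fun i : Fin n => i.val < k n ∧ w n i ≤ M).card := by
  have hlim : Tendsto (fun x : ℝ => C * x ^ (1 - τ)) atTop (𝓝 0) := by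
    have := (tendsto_rpow_neg_atTop (by linarith : 0 < τ - 1)).const_mul C
    simpa using this
  obtain ⟨M, hM4, hMw, hM0⟩ := ((hlim.eventually_lt_const (by norm_num : (0 : ℝ) < 1 / 4)).and
    ((eventually_ge_atTop w0).and (eventually_gt_atTop 0))).exists
  refine ⟨M, hM0, ?_⟩
  have hkR : Tendsto (fun n => (k n : ℝ)) atTop atTop := tendsto_natCast_atTop_atTop.comp hkinf
  have hlog : ∀ᶠ x : ℝ in atTop, M ≤ 1 * x ^ ((1 : ℝ) / (τ - 1)) / Real.log x := by
    have hr : 0 < (1 : ℝ) / (τ - 1) := by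
      have : 0 < τ - 1 := by linarith
      positivity
    filter_upwards [(isLittleO_log_rpow_atTop hr).bound (inv_pos.2 hM0), eventually_gt_atTop 1]
      with x hx hx1
    have hl : 0 < Real.log x := Real.log_pos hx1
    rw [Real.norm_of_nonneg hl.le, Real.norm_of_nonneg (by positivity), inv_mul_eq_div,
      le_div_iff₀ hM0] at hx
    rw [le_div_iff₀ hl]
    linarith
  obtain ⟨N, hN⟩ := hA2 1 one_pos 1 one_pos
  filter_upwards [hkR.eventually hlog, hkR.eventually_gt_atTop 0, eventually_ge_atTop N]
    with n hMn hk0 hn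
  have h := (abs_le.1 (hN n hn M hMw hMn)).2
  have hlt : ((univ.filter fun i : Fin n => i.val < k n ∧ M < w n i).card : ℝ) ≤ k n / 2 := by
    have : ((univ.filter fun i : Fin n => i.val < k n ∧ M < w n i).card : ℝ) / k n ≤ 1 / 2 := by
      linarith
    rw [div_le_iff₀ hk0] at this
    linarith
  have hsplit := Finset.card_filter_add_card_filter_not
    (s := univ.filter fun i : Fin n => i.val < k n) (fun i => w n i ≤ M)
  simp only [Finset.filter_filter, not_le, Fin.card_filter_val_lt, min_eq_right (hkn n)]
    at hsplit
  have : ((univ.filter fun i : Fin n => i.val < k n ∧ w n i ≤ M).card : ℝ) +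
      (univ.filter fun i : Fin n => i.val < k n ∧ M < w n i).card = k n := by
    exact_mod_cast hsplit
  linarith

lemma exists_grid_size {d : ℕ} (hd : 1 ≤ d) {t : ℝ} (ht : 1 ≤ t) :
    ∃ m : ℕ, 0 < m ∧ t ≤ (m : ℝ) ^ d ∧ (m : ℝ) ^ d ≤ 2 ^ d * t := by
  have hd0 : d ≠ 0 := by lia
  set s : ℝ := t ^ ((d : ℝ)⁻¹)
  have hs1 : 1 ≤ s := Real.one_le_rpow ht (by positivity)
  have hsd : s ^ d = t := Real.rpow_inv_natCast_pow (by linarith) hd0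
  refine ⟨⌈s⌉₊, Nat.ceil_pos.2 (by linarith), ?_, ?_⟩
  · rw [← hsd]
    gcongr
    exact Nat.le_ceil s
  · rw [← hsd, ← mul_pow]
    gcongr
    linarith [Nat.ceil_lt_add_one (by linarith : 0 ≤ s)]

/-- Proposition 5.4 (expectation): under `H₁` with `k → ∞`, `k = o(n)`, the expected
weighted triangle statistic satisfies `E₁[W] = Ω(k)`. -/
theorem expected_weighted_triangles_H1
    (τ C w0 : ℝ) (hτ1 : 2 < τ) (hτ2 : τ < 3) (hC : 0 < C) (hw0 : 0 < w0)
    (hCw : C = w0 ^ (τ - 1))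
    (γ : ℝ) (hγ : 1 < γ) (d : ℕ) (hd : 1 ≤ d)
    (k : ℕ → ℕ) (hkn : ∀ n, k n ≤ n)
    (hko : (fun n : ℕ => (k n : ℝ)) =o[atTop] fun n : ℕ => (n : ℝ))
    (hkinf : Tendsto (fun n => k n) atTop atTop)
    (w : (n : ℕ) → Fin n → ℝ) (hww0 : ∀ n (i : Fin n), w0 ≤ w n i)
    (hA1 : Assumption1 τ C w0 w)
    (hA2 : Assumption2 τ C w0 k w)
    :
    ∃ c > (0:ℝ), ∀ᶠ n in atTop,
      c * (k n : ℝ) ≤ ∫ ω, WH1 n (k n) d γ (muPar τ C w0) (w n) ω ∂(H1Measure n d) := by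
  have hμ : 0 < muPar τ C w0 := by
    have h1 : 0 < τ - 1 := by linarith
    have h2 : 0 < τ - 2 := by linarith
    unfold muPar; positivity
  set μ := muPar τ C w0
  have hC1 := C1_pos d hγ
  obtain ⟨M, hM0, hM⟩ := exists_half_le_card hτ1 hkn hkinf hA2
  have hkR : Tendsto (fun n => (k n : ℝ)) atTop atTop := tendsto_natCast_atTop_atTop.comp hkinf
  set q : ℝ := (1 + C1 d γ)⁻¹
  have hq0 : 0 < q := by positivity
  set s : ℝ := μ / w0 ^ 2
  have hs : 0 < s := by positivity
  refine ⟨(1 / 4) ^ 3 * (((2 ^ d * s) ^ 2)⁻¹ * (((3 : ℝ) ^ d)⁻¹) ^ 3 * q ^ 3 * (M ^ 3)⁻¹),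
    by positivity, ?_⟩
  filter_upwards [hM, hkR.eventually_ge_atTop 8, hkR.eventually_ge_atTop s⁻¹]
    with n hcard hk8 hks
  have hk0 : (0 : ℝ) < k n := by linarith
  obtain ⟨m, hm, hm1, hm2⟩ := exists_grid_size hd
    (by rwa [inv_le_iff_one_le_mul₀ hs, mul_comm] at hks : 1 ≤ s * k n)
  have hm' : (0 : ℝ) < m := by exact_mod_cast hm
  have hmk : μ * k n ≤ w0 ^ 2 * (m : ℝ) ^ d := by
    calc μ * k n = w0 ^ 2 * (s * k n) := by simp only [s]; field_simp
      _ ≤ _ := by gcongr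
  set S := univ.filter fun i : Fin n => i.val < k n ∧ w n i ≤ M
  have hwpos : ∀ i, 0 < w n i := fun i => hw0.trans_le (hww0 n i)
  rw [integral_WH1]
  have hS : 2 ≤ S.card := by
    have : (2 : ℝ) ≤ S.card := by linarith
    exact_mod_cast this
  refine le_trans ?_ (le_sum_triples S
    (p := (m : ℝ) ^ d * (((3 * m : ℝ) ^ d)⁻¹) ^ 3 * q ^ 3 * (M ^ 3)⁻¹) (by positivity) ?_ ?_ hS)
  · have hp : ((2 ^ d * (s * k n)) ^ 2)⁻¹ * (((3 : ℝ) ^ d)⁻¹) ^ 3 * q ^ 3 * (M ^ 3)⁻¹ ≤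
        (m : ℝ) ^ d * (((3 * m : ℝ) ^ d)⁻¹) ^ 3 * q ^ 3 * (M ^ 3)⁻¹ := by
      have e : (m : ℝ) ^ d * (((3 * m : ℝ) ^ d)⁻¹) ^ 3 =
          (((m : ℝ) ^ d) ^ 2)⁻¹ * (((3 : ℝ) ^ d)⁻¹) ^ 3 := by
        rw [mul_pow]; field_simp
      rw [e]
      gcongr
    calc _ = ((k n : ℝ) / 4) ^ 3 *
          (((2 ^ d * (s * k n)) ^ 2)⁻¹ * (((3 : ℝ) ^ d)⁻¹) ^ 3 * q ^ 3 * (M ^ 3)⁻¹) := by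
            field_simp
      _ ≤ _ := by
        have h : (k n : ℝ) / 4 ≤ S.card - 2 := by linarith
        exact mul_le_mul (pow_le_pow_left₀ (by positivity) h 3) hp (by positivity)
          (pow_nonneg (by linarith) 3)
  · intro a b c
    have := hwpos a
    have := hwpos b
    have := hwpos c
    positivity
  · intro a ha b hb c hc hab hbc hca
    simp only [S, Finset.mem_filter, Finset.mem_univ, true_and] at ha hb hc
    have h1 := hwpos a
    have h2 := hwpos b
    have h3 := hwpos c
    refine mul_le_mul (le_measure_triH1 hd hγ hw0 hμ hm hmk (hww0 n) ha.1 hb.1 hc.1 hab hbc hca)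
      ?_ (by positivity) measureReal_nonneg
    gcongr
    calc w n a * w n b * w n c ≤ M * M * M := by
          gcongr
          exacts [ha.2, hb.2, hc.2]
      _ = M ^ 3 := by ring
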